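/- For all integers n, m with n > m > 2 and every field k of characteristic 2, the group algebras kG and kH are isomorphic as k-algebras. -/

import Mathlib

/-!
The isomorphism is explicit: with `X = a` and `Y = 1 + a (1 + b)` in `kH`, the assignment
`x ↦ X`, `y ↦ Y` extends to an algebra homomorphism `φ : kG → kH`, and `a ↦ x`,
`b ↦ 1 + x⁻¹ (1 + y)` extends to `ψ : kH → kG`. In characteristic two these are visibly inverse to
each other: `φ (ψ b) = 1 + a⁻¹ (1 + Y) = 1 + a⁻¹ a (1 + b) = b`, and likewise
`ψ (φ y) = 1 + x x⁻¹ (1 + y) = y`. So it only remains to check the defining relations.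

Write `v` for the conjugate of the second generator by the first. Then `z = y⁻¹ v`, and the
relations of `G` involving `z` amount to `v x = x y` (the square of `x` is central),
`v² = y²` and `(y v)² = (v y)²` (`GData`); those of `H` amount to `v a = a b`, `b v = v b` and
`v⁴ = b⁴` (`HData`). Both are checked in an arbitrary ring of characteristic two:

* `GData.of_HData`: let `e = 1 + b`, `g = 1 + v`, `t = a e` and `w = e a = a⁻¹ t a`. As
  `e a = a g`, `g a = a e` and `e g = g e`, one finds `t² = w² = a² e g` and
  `t w + w t = a² (e² + g²)`, whose square is `a⁴ (e⁴ + g⁴) = 0`. For `Y = 1 + t` and its conjugate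
  `1 + w` this gives the relations of `G`.
* `HData.of_GData`: let `u = x⁻¹`, `f = 1 + y`, `g = 1 + v`, `t = u f` and `w = f u = x⁻¹ t x`.
  Then `t w = w t = u² f²`, and `t⁴ + w⁴ = (t² + w²)² = u⁴ (f g + g f)² = 0`, which gives the
  relations of `H` for `1 + t` and `1 + w`.

In both cases the eighth power of `t` is `s⁸ (1 + r)⁸`, where `r` is the second generator and `s` is
the first one or its inverse. Since `m ≥ 3`, the power `t ^ 2 ^ m` is divisible by
`(1 + r) ^ 2 ^ m = 0`, so `(1 + t) ^ 2 ^ m = 1` (`pow_eq_zero_of_pow_eight`).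
-/

namespace MIP

/-- Relators of the group `G`. -/
def grels (n m : ℕ) : Set (FreeGroup (Fin 3)) :=
  {(FreeGroup.of 2)⁻¹ * ((FreeGroup.of 1)⁻¹ * (FreeGroup.of 0)⁻¹ * FreeGroup.of 1 * FreeGroup.of 0),
   FreeGroup.of 0 ^ (2 ^ n), FreeGroup.of 1 ^ (2 ^ m), FreeGroup.of 2 ^ 4,
   (FreeGroup.of 0)⁻¹ * FreeGroup.of 2 * FreeGroup.of 0 * FreeGroup.of 2,
   (FreeGroup.of 1)⁻¹ * FreeGroup.of 2 * FreeGroup.of 1 * FreeGroup.of 2}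

/-- Relators of the group `H`. -/
def hrels (n m : ℕ) : Set (FreeGroup (Fin 3)) :=
  {(FreeGroup.of 2)⁻¹ * ((FreeGroup.of 1)⁻¹ * (FreeGroup.of 0)⁻¹ * FreeGroup.of 1 * FreeGroup.of 0),
   FreeGroup.of 0 ^ (2 ^ n), FreeGroup.of 1 ^ (2 ^ m), FreeGroup.of 2 ^ 4,
   (FreeGroup.of 0)⁻¹ * FreeGroup.of 2 * FreeGroup.of 0 * FreeGroup.of 2,
   (FreeGroup.of 1)⁻¹ * FreeGroup.of 2 * FreeGroup.of 1 * (FreeGroup.of 2)⁻¹}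

abbrev GG (n m : ℕ) := PresentedGroup (grels n m)
abbrev HH (n m : ℕ) := PresentedGroup (hrels n m)

def gx (n m : ℕ) : GG n m := PresentedGroup.of 0
def gy (n m : ℕ) : GG n m := PresentedGroup.of 1
def gz (n m : ℕ) : GG n m := PresentedGroup.of 2
def ha (n m : ℕ) : HH n m := PresentedGroup.of 0
def hb (n m : ℕ) : HH n m := PresentedGroup.of 1
def hc (n m : ℕ) : HH n m := PresentedGroup.of 2

/-! ### The relations of `G` and `H` in terms of a generator and its conjugate -/

section GroupRelations

variable {U : Type*} [Group U]

/-- The relations of `G` hold for `x`, `y` and `z = [y, x]`, where the relations in which `z` occurs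
are expressed through the conjugate `v = x⁻¹ y x` alone. -/
structure GData (n m : ℕ) (x y v : U) : Prop where
  conj : y * x = x * v
  conj' : v * x = x * y
  sq : v * v = y * y
  alt : y * v * (y * v) = v * y * (v * y)
  powx : x ^ 2 ^ n = 1
  powy : y ^ 2 ^ m = 1

/-- The relations of `H` hold for `a`, `b` and `c = [b, a]`, where the relations in which `c` occurs
are expressed through the conjugate `v = a⁻¹ b a` alone. -/
structure HData (n m : ℕ) (a b v : U) : Prop where
  conj : b * a = a * v
  conj' : v * a = a * b
  comm : b * v = v * b
  pow4 : v ^ 4 = b ^ 4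
  powa : a ^ 2 ^ n = 1
  powb : b ^ 2 ^ m = 1

/-- If `x` inverts `z = [y, x]`, then `x²` commutes with `y`. -/
theorem conj'_of_inverted {x y z : U} (h : z = y⁻¹ * x⁻¹ * y * x) (hx : x⁻¹ * z * x * z = 1) :
    y * z * x = x * y := by
  have h1 : z * x * z = x := by
    have := congrArg (x * ·) hx
    simpa [mul_assoc] using this
  have h2 : x * (y * z) = y * x := by rw [h]; group
  calc y * z * x = y * (z * x * z) * z⁻¹ := by group
    _ = x * (y * z) * z⁻¹ := by rw [h1, h2]
    _ = x * y := by group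

theorem GData.of_relations {n m : ℕ} {x y z : U} (h : z = y⁻¹ * x⁻¹ * y * x)
    (px : x ^ 2 ^ n = 1) (py : y ^ 2 ^ m = 1) (pz : z ^ 4 = 1)
    (hx : x⁻¹ * z * x * z = 1) (hy : y⁻¹ * z * y * z = 1) : GData n m x y (y * z) := by
  have h1 : z * y = y * z⁻¹ := by
    have := congrArg (fun w => y * w * z⁻¹) hy
    simpa [mul_assoc] using this
  have h2 : z⁻¹ * y = y * z := by
    calc z⁻¹ * y = z⁻¹ * (y * z⁻¹) * z := by group
      _ = y * z := by rw [← h1]; group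
  have h1' (w : U) : z * (y * w) = y * (z⁻¹ * w) := by rw [← mul_assoc, h1, mul_assoc]
  have h2' (w : U) : z⁻¹ * (y * w) = y * (z * w) := by rw [← mul_assoc, h2, mul_assoc]
  have h3 : z * z = z⁻¹ * z⁻¹ := by
    calc z * z = z ^ 4 * (z⁻¹ * z⁻¹) := by simp [pow_succ, mul_assoc]
      _ = _ := by rw [pz, one_mul]
  refine ⟨by rw [h]; group, conj'_of_inverted h hx, ?_, ?_, px, py⟩
  · simp only [mul_assoc, h1', inv_mul_cancel, mul_one]
  · simp only [mul_assoc, h1, h1', h2', h3]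

theorem HData.of_relations {n m : ℕ} {a b c : U} (h : c = b⁻¹ * a⁻¹ * b * a)
    (pa : a ^ 2 ^ n = 1) (pb : b ^ 2 ^ m = 1) (pc : c ^ 4 = 1)
    (ha : a⁻¹ * c * a * c = 1) (hb : b⁻¹ * c * b * c⁻¹ = 1) : HData n m a b (b * c) := by
  have h1 : c * b = b * c := by
    have := congrArg (fun w => b * w * c) hb
    simpa [mul_assoc] using this
  refine ⟨by rw [h]; group, conj'_of_inverted h ha, ?_, ?_, pa, pb⟩
  · rw [mul_assoc b c b, h1]
  · have h2 : Commute b c := h1.symm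
    rw [h2.mul_pow, pc, mul_one]

/-- Converse of `conj'_of_inverted`, with `z = y⁻¹ v`. -/
theorem inverted_of_conj' {x y v : U} (h : y * x = x * v) (h' : v * x = x * y) :
    x⁻¹ * (y⁻¹ * v) * x * (y⁻¹ * v) = 1 := by
  calc _ = x⁻¹ * y⁻¹ * (v * x) * y⁻¹ * v := by group
    _ = x⁻¹ * y⁻¹ * (x * v) := by rw [h']; group
    _ = 1 := by rw [← h]; group

theorem commutator_eq {x y v : U} (h : y * x = x * v) : y⁻¹ * x⁻¹ * y * x = y⁻¹ * v := by
  rw [mul_assoc _ y x, h]; group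

theorem GData.pow4 {n m : ℕ} {x y v : U} (h : GData n m x y v) : (y⁻¹ * v) ^ 4 = 1 := by
  have hs := h.sq
  -- `y² = v²` commutes with both `y` and `v`, and `y⁻¹ v = y⁻² (y v)`.
  have c1 : Commute (y * y) y := by simp [Commute, SemiconjBy, mul_assoc]
  have c2 : Commute (y * y) v := by rw [← hs]; simp [Commute, SemiconjBy, mul_assoc]
  have c3 : Commute (y * y)⁻¹ (y * v) := (c1.mul_right c2).inv_left
  have e : y⁻¹ * v = (y * y)⁻¹ * (y * v) := by group
  have e4 : (y * v) ^ 4 = (y * y) ^ 4 := by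
    calc (y * v) ^ 4 = (y * v * (y * v)) * (y * v * (y * v)) := by
          simp only [pow_succ, pow_zero, one_mul, mul_assoc]
      _ = (y * v * (y * v)) * (v * y * (v * y)) := by rw [h.alt]
      _ = y * v * (y * (v * v) * y) * (v * y) := by group
      _ = y * (v * ((y * y) * (y * y))) * v * y := by rw [hs]; group
      _ = y * (((y * y) * (y * y)) * v) * v * y := by rw [(c2.mul_left c2).eq]
      _ = y * ((y * y) * (y * y)) * (v * v) * y := by group
      _ = (y * y) ^ 4 := by rw [hs]; simp only [pow_succ, pow_zero, one_mul, mul_assoc]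
  rw [e, c3.mul_pow, e4, inv_pow, inv_mul_cancel]

end GroupRelations

/-- `GData` in a group yields a homomorphism from `G` to it. -/
theorem exists_hom_G {n m : ℕ} {U : Type*} [Group U] {x y v : U} (h : GData n m x y v) :
    ∃ F : GG n m →* U, F (gx n m) = x ∧ F (gy n m) = y := by
  have hr : ∀ r ∈ grels n m, FreeGroup.lift ![x, y, y⁻¹ * v] r = 1 := by
    intro r hr
    simp only [grels, Set.mem_insert_iff, Set.mem_singleton_iff] at hr
    rcases hr with rfl | rfl | rfl | rfl | rfl | rfl
    · simp [commutator_eq h.conj]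
    · simp [h.powx]
    · simp [h.powy]
    · simpa using h.pow4
    · simpa using inverted_of_conj' h.conj h.conj'
    · simp [mul_assoc, h.sq]
  exact ⟨PresentedGroup.toGroup hr, PresentedGroup.toGroup.of hr, PresentedGroup.toGroup.of hr⟩

/-- `HData` in a group yields a homomorphism from `H` to it. -/
theorem exists_hom_H {n m : ℕ} {U : Type*} [Group U] {a b v : U} (h : HData n m a b v) :
    ∃ F : HH n m →* U, F (ha n m) = a ∧ F (hb n m) = b := by
  have hc : Commute b v := h.comm
  have hr : ∀ r ∈ hrels n m, FreeGroup.lift ![a, b, b⁻¹ * v] r = 1 := by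
    intro r hr
    simp only [hrels, Set.mem_insert_iff, Set.mem_singleton_iff] at hr
    rcases hr with rfl | rfl | rfl | rfl | rfl | rfl
    · simp [commutator_eq h.conj]
    · simp [h.powa]
    · simp [h.powb]
    · simp [hc.inv_left.mul_pow, h.pow4]
    · simpa using inverted_of_conj' h.conj h.conj'
    · have c1 : Commute b (b⁻¹ * v) := ((Commute.refl b).inv_right).mul_right hc
      simp only [map_mul, map_inv, FreeGroup.lift_apply_of]
      change b⁻¹ * (b⁻¹ * v) * b * (b⁻¹ * v)⁻¹ = 1
      rw [mul_assoc b⁻¹, ← c1.eq]; group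
  exact ⟨PresentedGroup.toGroup hr, PresentedGroup.toGroup.of hr, PresentedGroup.toGroup.of hr⟩

theorem gz_eq (n m : ℕ) : gz n m = (gy n m)⁻¹ * (gx n m)⁻¹ * gy n m * gx n m := by
  have := PresentedGroup.one_of_mem (rels := grels n m) (Set.mem_insert _ _)
  simp only [map_mul, map_inv] at this
  exact inv_mul_eq_one.mp this

theorem hc_eq (n m : ℕ) : hc n m = (hb n m)⁻¹ * (ha n m)⁻¹ * hb n m * ha n m := by
  have := PresentedGroup.one_of_mem (rels := hrels n m) (Set.mem_insert _ _)
  simp only [map_mul, map_inv] at this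
  exact inv_mul_eq_one.mp this

theorem gData (n m : ℕ) : GData n m (gx n m) (gy n m) (gy n m * gz n m) := by
  have key {r} (hr : r ∈ grels n m) := PresentedGroup.one_of_mem hr
  refine .of_relations (gz_eq n m) ?_ ?_ ?_ ?_ ?_
  · exact key (r := FreeGroup.of 0 ^ 2 ^ n) (by simp [grels])
  · exact key (r := FreeGroup.of 1 ^ 2 ^ m) (by simp [grels])
  · exact key (r := FreeGroup.of 2 ^ 4) (by simp [grels])
  · exact key (r := (FreeGroup.of 0)⁻¹ * FreeGroup.of 2 * FreeGroup.of 0 * FreeGroup.of 2)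
      (by simp [grels])
  · exact key (r := (FreeGroup.of 1)⁻¹ * FreeGroup.of 2 * FreeGroup.of 1 * FreeGroup.of 2)
      (by simp [grels])

theorem hData (n m : ℕ) : HData n m (ha n m) (hb n m) (hb n m * hc n m) := by
  have key {r} (hr : r ∈ hrels n m) := PresentedGroup.one_of_mem hr
  refine .of_relations (hc_eq n m) ?_ ?_ ?_ ?_ ?_
  · exact key (r := FreeGroup.of 0 ^ 2 ^ n) (by simp [hrels])
  · exact key (r := FreeGroup.of 1 ^ 2 ^ m) (by simp [hrels])
  · exact key (r := FreeGroup.of 2 ^ 4) (by simp [hrels])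
  · exact key (r := (FreeGroup.of 0)⁻¹ * FreeGroup.of 2 * FreeGroup.of 0 * FreeGroup.of 2)
      (by simp [hrels])
  · exact key (r := (FreeGroup.of 1)⁻¹ * FreeGroup.of 2 * FreeGroup.of 1 * (FreeGroup.of 2)⁻¹)
      (by simp [hrels])

theorem hom_ext_G {n m : ℕ} {M : Type*} [Monoid M] {F F' : GG n m →* M}
    (hx : F (gx n m) = F' (gx n m)) (hy : F (gy n m) = F' (gy n m)) : F = F' := by
  -- `M` is only a monoid, so the extensionality lemma for homomorphisms between groups is
  -- unavailable; the equalizer is nevertheless a subgroup of the source.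
  have hx' : gx n m ∈ F.eqLocus F' := hx
  have hy' : gy n m ∈ F.eqLocus F' := hy
  have top : F.eqLocus F' = ⊤ := by
    rw [eq_top_iff, ← PresentedGroup.closure_range_of, Subgroup.closure_le]
    rintro _ ⟨i, rfl⟩
    fin_cases i
    · exact hx'
    · exact hy'
    · change gz n m ∈ F.eqLocus F'
      rw [gz_eq]
      exact mul_mem (mul_mem (mul_mem (inv_mem hy') (inv_mem hx')) hy') hx'
  ext g
  have : g ∈ F.eqLocus F' := top ▸ Subgroup.mem_top g
  exact this

theorem hom_ext_H {n m : ℕ} {M : Type*} [Monoid M] {F F' : HH n m →* M}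
    (ha' : F (ha n m) = F' (ha n m)) (hb' : F (hb n m) = F' (hb n m)) : F = F' := by
  have h1 : ha n m ∈ F.eqLocus F' := ha'
  have h2 : hb n m ∈ F.eqLocus F' := hb'
  have top : F.eqLocus F' = ⊤ := by
    rw [eq_top_iff, ← PresentedGroup.closure_range_of, Subgroup.closure_le]
    rintro _ ⟨i, rfl⟩
    fin_cases i
    · exact h1
    · exact h2
    · change hc n m ∈ F.eqLocus F'
      rw [hc_eq]
      exact mul_mem (mul_mem (mul_mem (inv_mem h2) (inv_mem h1)) h2) h1
  ext g
  have : g ∈ F.eqLocus F' := top ▸ Subgroup.mem_top g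
  exact this

/-! ### Exchanging the two sets of relations in characteristic two -/

section CharTwo

variable {R : Type*} [Ring R] [CharP R 2]

theorem one_add_pow_two_pow (t : R) (k : ℕ) : (1 + t) ^ 2 ^ k = 1 + t ^ 2 ^ k := by
  rw [add_pow_char_pow_of_commute 2 k (Commute.one_left t), one_pow]

theorem one_add_pow_four (t : R) : (1 + t) ^ 4 = 1 + t ^ 4 := one_add_pow_two_pow t 2

theorem eq_of_add_eq_zero_char_two {s t : R} (h : s + t = 0) : s = t :=
  CharTwo.add_eq_zero.mp h

/-- If `t⁸ = u⁸ f⁸` as though `t` were a product of commuting `u` and `f`, and `1 + f` has order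
dividing `2 ^ m` with `m ≥ 3`, then `t` is nilpotent, because `f ^ 2 ^ m = 0`. -/
theorem pow_eq_zero_of_pow_eight {m : ℕ} (hm : 2 < m) {u f t : R}
    (ht : t ^ 8 = (u * u) ^ 4 * (f * f) ^ 4) (hc : Commute (u * u) f)
    (hf : (1 + f) ^ 2 ^ m = 1) : t ^ 2 ^ m = 0 := by
  obtain ⟨j, rfl⟩ : ∃ j, m = 3 + j := ⟨m - 3, by omega⟩
  have hf0 : f ^ 2 ^ (3 + j) = 0 := by
    rw [one_add_pow_two_pow] at hf
    simpa using hf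
  have e : 2 ^ (3 + j) = 8 * 2 ^ j := by rw [pow_add]; norm_num
  have hff : (f * f) ^ 4 = f ^ 8 := by rw [← pow_two, ← pow_mul]
  have hc' : Commute ((u * u) ^ 4) (f ^ 8) := hc.pow_pow 4 8
  rw [e, pow_mul, ht, hff, hc'.mul_pow, ← pow_mul f, ← e, hf0, mul_zero]

/-- `x` and `1 + x⁻¹ (1 + y)` satisfy the relations of `H` when `x` and `y` satisfy those of `G`. -/
theorem HData.of_GData {n m : ℕ} (hm : 2 < m) {x y v : Rˣ} (h : GData n m x y v) :
    ∃ b w : Rˣ, (b : R) = 1 + ↑x⁻¹ * (1 + y) ∧ HData n m x b w := by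
  have v2 : (v : R) * v = y * y := by exact_mod_cast h.sq
  have alt : (y : R) * v * (y * v) = v * y * (v * y) := by exact_mod_cast h.alt
  obtain ⟨f, hf⟩ : ∃ f : R, f = 1 + y := ⟨_, rfl⟩
  obtain ⟨g, hg⟩ : ∃ g : R, g = 1 + v := ⟨_, rfl⟩
  obtain ⟨u, hu⟩ : ∃ u : R, u = ↑x⁻¹ := ⟨_, rfl⟩
  have ux : u * x = 1 := by simp [hu]
  have xu : x * u = 1 := by simp [hu]
  have yu : (y : R) * u = u * v := by
    rw [hu]; norm_cast
    rw [mul_inv_eq_iff_eq_mul, mul_assoc, h.conj']; group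
  have vu : (v : R) * u = u * y := by
    rw [hu]; norm_cast
    rw [mul_inv_eq_iff_eq_mul, mul_assoc, h.conj]; group
  have fu : f * u = u * g := by rw [hf, hg, add_mul, mul_add, yu]; simp
  have gu : g * u = u * f := by rw [hf, hg, add_mul, mul_add, vu]; simp
  have fu' (w : R) : f * (u * w) = u * (g * w) := by rw [← mul_assoc, fu, mul_assoc]
  have gu' (w : R) : g * (u * w) = u * (f * w) := by rw [← mul_assoc, gu, mul_assoc]
  have gg : g * g = f * f := by
    have h1 := one_add_pow_two_pow (v : R) 1
    have h2 := one_add_pow_two_pow (y : R) 1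
    simp only [pow_one, pow_two] at h1 h2
    rw [hg, hf, h1, h2, v2]
  have gg' (w : R) : g * (g * w) = f * (f * w) := by rw [← mul_assoc, gg, mul_assoc]
  have fgf : (f * g + g * f) * (f * g + g * f) = 0 := by
    have e : f * g + g * f = y * v + v * y := by
      have e' : f * g + g * f = (1 + 1) + (y + y) + (v + v) + (y * v + v * y) := by
        rw [hf, hg]; noncomm_ring
      rw [e']; simp only [CharTwo.add_self_eq_zero, zero_add]
    have e2 : ((y : R) * v + v * y) * (y * v + v * y)
        = (y * v * (y * v) + v * y * (v * y)) + (y * (v * v) * y + v * (y * y) * v) := by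
      noncomm_ring
    rw [e, e2, alt, v2, CharTwo.add_self_eq_zero, ← v2, zero_add]
    have : (y : R) * (v * v) * y = v * (v * v) * v := by
      calc (y : R) * (v * v) * y = (y * y) * (y * y) := by rw [v2]; noncomm_ring
        _ = v * (v * v) * v := by rw [← v2]; noncomm_ring
    rw [this, CharTwo.add_self_eq_zero]
  obtain ⟨t, ht⟩ : ∃ t : R, t = u * f := ⟨_, rfl⟩
  obtain ⟨w, hw⟩ : ∃ w : R, w = f * u := ⟨_, rfl⟩
  have tw : t * w = (u * u) * (f * f) := by
    rw [ht, hw]; simp only [mul_assoc, fu, fu', gg]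
  have wt : w * t = (u * u) * (f * f) := by
    rw [ht, hw]; simp only [mul_assoc, fu, gu']
  have htw : Commute t w := tw.trans wt.symm
  have cu : Commute (u * u) f := by
    simp only [Commute, SemiconjBy, mul_assoc, gu, fu']
  have cug : Commute (u * u) g := by
    simp only [Commute, SemiconjBy, mul_assoc, fu, gu']
  have cuD : Commute (u * u) (f * g + g * f) :=
    (cu.mul_right cug).add_right (cug.mul_right cu)
  have t2w2 : t * t + w * w = (u * u) * (f * g + g * f) := by
    rw [ht, hw]; simp only [mul_assoc, fu, fu', gu', mul_add]
    rw [add_comm]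
  have sq0 : (t * t + w * w) ^ 2 = 0 := by
    rw [t2w2, cuD.mul_pow, pow_two (f * g + g * f), fgf, mul_zero]
  have t4 : t ^ 4 = w ^ 4 := by
    have := add_pow_char_pow_of_commute 2 1
      ((htw.mul_right htw).mul_left (htw.mul_right htw) : Commute (t * t) (w * w))
    rw [pow_one, sq0] at this
    simp only [← pow_two, ← pow_mul] at this
    exact eq_of_add_eq_zero_char_two this.symm
  have t8 : t ^ 8 = (u * u) ^ 4 * (f * f) ^ 4 := by
    rw [← (cu.mul_right cu).mul_pow, ← tw, htw.mul_pow, ← t4, ← pow_add]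
  have tm : t ^ 2 ^ m = 0 := by
    refine pow_eq_zero_of_pow_eight hm t8 cu ?_
    have e : 1 + f = y := by rw [hf, ← add_assoc, CharTwo.add_self_eq_zero, zero_add]
    rw [e, ← Units.val_pow_eq_pow_val, h.powy, Units.val_one]
  have bm : (1 + t) ^ 2 ^ m = 1 := by rw [one_add_pow_two_pow, tm, add_zero]
  obtain ⟨b, hb⟩ : ∃ b : Rˣ, (b : R) = 1 + t :=
    ⟨Units.ofPowEqOne (1 + t) (2 ^ m) bm (by positivity), rfl⟩
  obtain ⟨c, hcc⟩ : ∃ c : Rˣ, c = x⁻¹ * b * x := ⟨_, rfl⟩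
  have hc : (c : R) = 1 + w := by
    have e : u * (u * f) * x = f * u * (u * x) := by simp only [mul_assoc, fu', gu']
    simp only [hcc, Units.val_mul, hb, ← hu]
    rw [mul_add, add_mul, mul_one, ux, ht, e, ux, mul_one, hw]
  refine ⟨b, c, by rw [hb, ht, hu, hf], by rw [hcc]; group, ?_, ?_, ?_, h.powx, ?_⟩
  · ext
    rw [Units.val_mul, Units.val_mul, hc, hb, hw, ht, add_mul, mul_add, mul_assoc, ux,
      ← mul_assoc, xu]
    simp
  · ext
    rw [Units.val_mul, Units.val_mul, hc, hb]
    exact ((Commute.one_left _).add_left ((Commute.one_right t).add_right htw)).eq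
  · ext
    rw [Units.val_pow_eq_pow_val, Units.val_pow_eq_pow_val, hc, hb, one_add_pow_four,
      one_add_pow_four, t4]
  · ext
    rw [Units.val_pow_eq_pow_val, hb, bm, Units.val_one]

/-- `a` and `1 + a (1 + b)` satisfy the relations of `G` when `a` and `b` satisfy those of `H`. -/
theorem GData.of_HData {n m : ℕ} (hm : 2 < m) {a b v : Rˣ} (h : HData n m a b v) :
    ∃ y w : Rˣ, (y : R) = 1 + a * (1 + b) ∧ GData n m a y w := by
  have ba : (b : R) * a = a * v := by exact_mod_cast h.conj
  have va : (v : R) * a = a * b := by exact_mod_cast h.conj'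
  have bv : (b : R) * v = v * b := by exact_mod_cast h.comm
  have v4 : (v : R) ^ 4 = b ^ 4 := by exact_mod_cast congrArg Units.val h.pow4
  obtain ⟨e, he⟩ : ∃ e : R, e = 1 + b := ⟨_, rfl⟩
  obtain ⟨g, hg⟩ : ∃ g : R, g = 1 + v := ⟨_, rfl⟩
  have ea : e * a = a * g := by rw [he, hg, add_mul, mul_add, ba]; simp
  have ga : g * a = a * e := by rw [he, hg, add_mul, mul_add, va]; simp
  have ea' (w : R) : e * (a * w) = a * (g * w) := by rw [← mul_assoc, ea, mul_assoc]
  have ga' (w : R) : g * (a * w) = a * (e * w) := by rw [← mul_assoc, ga, mul_assoc]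
  have ge : g * e = e * g := by
    rw [he, hg]
    have : Commute (v : R) b := bv.symm
    exact ((Commute.one_left _).add_left ((Commute.one_right _).add_right this)).eq
  have g4 : g ^ 4 = e ^ 4 := by rw [hg, he, one_add_pow_four, one_add_pow_four, v4]
  obtain ⟨t, ht⟩ : ∃ t : R, t = a * e := ⟨_, rfl⟩
  obtain ⟨w, hw⟩ : ∃ w : R, w = e * a := ⟨_, rfl⟩
  have ca : Commute ((a : R) * a) e := by
    simp only [Commute, SemiconjBy, mul_assoc, ga, ea']
  have cag : Commute ((a : R) * a) g := by
    simp only [Commute, SemiconjBy, mul_assoc, ea, ga']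
  have cge : Commute g e := ge
  have tt : t * t = (a * a) * (e * g) := by
    rw [ht]; simp only [mul_assoc, ea', ge]
  have ww : w * w = t * t := by
    rw [hw, ht]; simp only [mul_assoc, ea, ea', ga', ge]
  have D : t * w + w * t = (a * a) * (g * g + e * e) := by
    rw [hw, ht]; simp only [mul_assoc, ea, ea', ga', mul_add]
  have D2 : (t * w + w * t) ^ 2 = 0 := by
    have c1 : Commute ((a : R) * a) (g * g + e * e) :=
      (cag.mul_right cag).add_right (ca.mul_right ca)
    have c2 : Commute (g * g) (e * e) := (cge.mul_right cge).mul_left (cge.mul_right cge)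
    have := add_pow_char_pow_of_commute 2 1 c2
    simp only [pow_one, ← pow_two, ← pow_mul] at this
    norm_num at this
    rw [D, c1.mul_pow, ← pow_two g, ← pow_two e, this, g4, CharTwo.add_self_eq_zero, mul_zero]
  have t8 : t ^ 8 = ((a : R) * a) ^ 4 * (e * e) ^ 4 := by
    have c1 : Commute ((a : R) * a) (e * g) := ca.mul_right cag
    have : t ^ 8 = (t * t) ^ 4 := by rw [← pow_two, ← pow_mul]
    rw [this, tt, c1.mul_pow, cge.symm.mul_pow, g4, (Commute.refl e).mul_pow]
  have tm : t ^ 2 ^ m = 0 := by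
    refine pow_eq_zero_of_pow_eight hm t8 ca ?_
    have e1 : 1 + e = b := by rw [he, ← add_assoc, CharTwo.add_self_eq_zero, zero_add]
    rw [e1, ← Units.val_pow_eq_pow_val, h.powb, Units.val_one]
  have ym : (1 + t) ^ 2 ^ m = 1 := by rw [one_add_pow_two_pow, tm, add_zero]
  obtain ⟨y, hy⟩ : ∃ y : Rˣ, (y : R) = 1 + t :=
    ⟨Units.ofPowEqOne (1 + t) (2 ^ m) ym (by positivity), rfl⟩
  obtain ⟨c, hcc⟩ : ∃ c : Rˣ, c = a⁻¹ * y * a := ⟨_, rfl⟩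
  have hc : (c : R) = 1 + w := by
    simp only [hcc, Units.val_mul, hy]
    rw [mul_add, add_mul, mul_one, ht, hw, Units.inv_mul_cancel_left, Units.inv_mul]
  have sq : (1 + w) * (1 + w) = (1 + t) * (1 + t) := by
    have h1 := one_add_pow_two_pow w 1
    have h2 := one_add_pow_two_pow t 1
    simp only [pow_one, pow_two] at h1 h2
    rw [h1, h2, ww]
  refine ⟨y, c, by rw [hy, ht, he], by rw [hcc]; group, ?_, ?_, ?_, h.powa, ?_⟩
  · ext
    rw [Units.val_mul, Units.val_mul, hc, hy, hw, ht, add_mul, mul_add]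
    simp only [mul_assoc, ea, ga, one_mul, mul_one]
  · ext
    rw [Units.val_mul, Units.val_mul, hc, hy, sq]
  · ext
    simp only [Units.val_mul]
    rw [hc, hy]
    obtain ⟨p, hp⟩ : ∃ p, p = 1 + t := ⟨_, rfl⟩
    obtain ⟨q, hq⟩ : ∃ q, q = 1 + w := ⟨_, rfl⟩
    rw [← hp, ← hq] at sq ⊢
    -- The two products `p q` and `q p` commute and differ by an element of square zero.
    have c : Commute (p * q) (q * p) := by
      calc p * q * (q * p) = p * (q * q) * p := by noncomm_ring
        _ = (p * p) * (p * p) := by rw [sq]; noncomm_ring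
        _ = q * (q * q) * q := by rw [← sq]; noncomm_ring
        _ = q * p * (p * q) := by rw [sq]; noncomm_ring
    have s : p * q + q * p = t * w + w * t := by
      have : p * q + q * p = (1 + 1) + (t + t) + (w + w) + (t * w + w * t) := by
        rw [hp, hq]; noncomm_ring
      rw [this]; simp only [CharTwo.add_self_eq_zero, zero_add]
    have := add_pow_char_pow_of_commute 2 1 c
    rw [pow_one, s, D2, pow_two, pow_two] at this
    exact eq_of_add_eq_zero_char_two this.symm
  · ext
    rw [Units.val_pow_eq_pow_val, hy, ym, Units.val_one]

end CharTwo

theorem GData.map {n m : ℕ} {U V : Type*} [Group U] [Group V] {x y v : U} (h : GData n m x y v)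
    (F : U →* V) : GData n m (F x) (F y) (F v) where
  conj := by rw [← map_mul, h.conj, map_mul]
  conj' := by rw [← map_mul, h.conj', map_mul]
  sq := by rw [← map_mul, h.sq, map_mul]
  alt := by simp only [← map_mul, h.alt]
  powx := by rw [← map_pow, h.powx, map_one]
  powy := by rw [← map_pow, h.powy, map_one]

theorem HData.map {n m : ℕ} {U V : Type*} [Group U] [Group V] {a b v : U} (h : HData n m a b v)
    (F : U →* V) : HData n m (F a) (F b) (F v) where
  conj := by rw [← map_mul, h.conj, map_mul]
  conj' := by rw [← map_mul, h.conj', map_mul]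
  comm := by rw [← map_mul, h.comm, map_mul]
  pow4 := by rw [← map_pow, h.pow4, map_pow]
  powa := by rw [← map_pow, h.powa, map_one]
  powb := by rw [← map_pow, h.powb, map_one]

/-! ### The two mutually inverse homomorphisms -/

section Maps

variable (k : Type*) [Field k] [CharP k 2]

open MonoidAlgebra in
theorem exists_map_G (n m : ℕ) (hm : 2 < m) :
    ∃ φ : MonoidAlgebra k (GG n m) →ₐ[k] MonoidAlgebra k (HH n m),
      φ (of k _ (gx n m)) = of k _ (ha n m) ∧ φ (of k _ (gx n m)⁻¹) = of k _ (ha n m)⁻¹ ∧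
      φ (of k _ (gy n m)) = 1 + of k _ (ha n m) * (1 + of k _ (hb n m)) := by
  have : CharP (MonoidAlgebra k (HH n m)) 2 := charP_of_injective_algebraMap' k 2
  obtain ⟨y, w, hy, h⟩ := GData.of_HData hm ((hData n m).map (of k (HH n m)).toHomUnits)
  obtain ⟨F, hFx, hFy⟩ := exists_hom_G h
  refine ⟨lift k _ _ ((Units.coeHom _).comp F), ?_, ?_, ?_⟩
  · rw [lift_of]; simp [hFx]
  · rw [lift_of, MonoidHom.comp_apply, map_inv, hFx, ← map_inv]; rfl
  · rw [lift_of, MonoidHom.comp_apply, hFy]; exact hy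

open MonoidAlgebra in
theorem exists_map_H (n m : ℕ) (hm : 2 < m) :
    ∃ ψ : MonoidAlgebra k (HH n m) →ₐ[k] MonoidAlgebra k (GG n m),
      ψ (of k _ (ha n m)) = of k _ (gx n m) ∧
      ψ (of k _ (hb n m)) = 1 + of k _ (gx n m)⁻¹ * (1 + of k _ (gy n m)) := by
  have : CharP (MonoidAlgebra k (GG n m)) 2 := charP_of_injective_algebraMap' k 2
  obtain ⟨b, w, hb, h⟩ := HData.of_GData hm ((gData n m).map (of k (GG n m)).toHomUnits)
  obtain ⟨F, hFx, hFy⟩ := exists_hom_H h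
  refine ⟨lift k _ _ ((Units.coeHom _).comp F), ?_, ?_⟩
  · rw [lift_of]; simp [hFx]
  · rw [lift_of, MonoidHom.comp_apply, hFy]; exact hb

end Maps

/-- For all integers `n, m` with `n > m > 2` and every field `k` of
characteristic 2, the group algebras `kG` and `kH` are isomorphic as `k`-algebras. -/
theorem statement_2 (n m : ℕ) (hm : 2 < m) (hmn : m < n)
    (k : Type) [Field k] [CharP k 2] :
    Nonempty (MonoidAlgebra k (GG n m) ≃ₐ[k] MonoidAlgebra k (HH n m)) := by
  have charG : CharP (MonoidAlgebra k (GG n m)) 2 := charP_of_injective_algebraMap' k 2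
  have charH : CharP (MonoidAlgebra k (HH n m)) 2 := charP_of_injective_algebraMap' k 2
  obtain ⟨φ, hx, hx', hy⟩ := exists_map_G k n m hm
  obtain ⟨ψ, ha', hb'⟩ := exists_map_H k n m hm
  refine ⟨AlgEquiv.ofAlgHom φ ψ ?_ ?_⟩
  · refine MonoidAlgebra.algHom_ext' (hom_ext_H ?_ ?_) (Subsingleton.elim _ _)
    · simp only [MonoidHom.comp_apply, MonoidHom.coe_coe, AlgHom.comp_apply, ha', hx,
        AlgHom.id_apply]
    · simp only [MonoidHom.comp_apply, MonoidHom.coe_coe, AlgHom.comp_apply, hb', map_add,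
        map_mul φ, map_one φ, hx', hy, AlgHom.id_apply]
      rw [← add_assoc 1 1, CharTwo.add_self_eq_zero, zero_add, ← mul_assoc, ← map_mul,
        inv_mul_cancel, map_one, one_mul, ← add_assoc, CharTwo.add_self_eq_zero, zero_add]
  · refine MonoidAlgebra.algHom_ext' (hom_ext_G ?_ ?_) (Subsingleton.elim _ _)
    · simp only [MonoidHom.comp_apply, MonoidHom.coe_coe, AlgHom.comp_apply, ha', hx,
        AlgHom.id_apply]
    · simp only [MonoidHom.comp_apply, MonoidHom.coe_coe, AlgHom.comp_apply, hy, map_add,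
        map_mul ψ, map_one ψ, ha', hb', AlgHom.id_apply]
      rw [← add_assoc 1 1, CharTwo.add_self_eq_zero, zero_add, ← mul_assoc, ← map_mul,
        mul_inv_cancel, map_one, one_mul, ← add_assoc, CharTwo.add_self_eq_zero, zero_add]

end MIP
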